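/- Let δ21 = X² + 2X + 2, δ22 = X² + 2, δ23 = X² − 2X + 2, δ41 = X⁴ + 2X³ + 2X² + 4X + 4, δ42 = X⁴ + 2X² + 4, and δ83 = X⁸ + 2X⁷ + 2X⁶ − 4X⁴ + 8X² + 16X + 16. Then for every n ≥ 5 and every finite field K with 2^n elements, the number of a ∈ K with T_1(a) = 0, T_2(a) = 0, T_3(a) = 0 and T_5(a) = 0 (with T_4(a) unrestricted) equals 2^{n−4} − (1/16)·(5ρ_n(δ21) + 2ρ_n(δ22) + 2ρ_n(δ23) + 3ρ_n(δ41) + ρ_n(δ42) + ρ_n(δ83)), as complex numbers. -/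

import Mathlib

open Polynomial

/-- For a finite field `K` with `2^n` elements, the `k`-th trace function
`T_k(a) = Σ_S ∏_{i ∈ S} a^(2^i)`, the sum over all `k`-element subsets `S` of `{0,…,n-1}`. -/
noncomputable def traceFn (q n k : ℕ) {K : Type*} [CommRing K] (a : K) : K :=
  ∑ S ∈ Finset.powersetCard k (Finset.range n), ∏ i ∈ S, a ^ (q ^ i)

/-- `ρ_n(γ)`: the sum of the `n`-th powers of the complex roots of `γ ∈ ℤ[X]`,
counted with multiplicity. -/
noncomputable def rho (n : ℕ) (γ : Polynomial ℤ) : ℂ :=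
  ((γ.map (Int.castRingHom ℂ)).roots.map (· ^ n)).sum

noncomputable def d21 : Polynomial ℤ := X ^ 2 + 2 * X + 2
noncomputable def d22 : Polynomial ℤ := X ^ 2 + 2
noncomputable def d23 : Polynomial ℤ := X ^ 2 - 2 * X + 2
noncomputable def d41 : Polynomial ℤ := X ^ 4 + 2 * X ^ 3 + 2 * X ^ 2 + 4 * X + 4
noncomputable def d42 : Polynomial ℤ := X ^ 4 + 2 * X ^ 2 + 4
noncomputable def d83 : Polynomial ℤ :=
  X ^ 8 + 2 * X ^ 7 + 2 * X ^ 6 - 4 * X ^ 4 + 8 * X ^ 2 + 16 * X + 16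

/-!
Up to sign, `T_k(a)` is the coefficient of `X ^ (n - k)` in the characteristic polynomial `f_a` of
`a` over `𝔽₂`. The conditions on `a` say that the reversed polynomial of `f_a` has trivial class in
a quotient of `(𝔽₂[T] / T ^ 6)ˣ` of order 16, so by orthogonality of characters 16 times the count
is `∑_χ ∑_a χ(f_a)`, where the trivial character contributes `2 ^ n`. The map `a ↦ f_a` takes each
prime power `P ^ k` of degree `n` as value `deg P` times, so `∑_a χ(f_a)` is the coefficient of
`T ^ n` in the logarithmic derivative `(T / L) dL/dT` of `L(T, χ) = ∑ χ(f) T ^ deg f`. For `χ ≠ 1`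
this `L`-series is a polynomial of degree at most four, and the product of these polynomials is the
reciprocal polynomial of `δ21⁵ δ22² δ23² δ41³ δ42 δ83`. Finally, the coefficient of `T ^ n` in the
logarithmic derivative of the reciprocal polynomial of `γ` is `-ρ_n(γ)`.
-/

open scoped PowerSeries

section EulerLogDeriv

variable {k : Type*} [Field k]

/-- The logarithmic derivative `X F' / F` of a power series `F`, with respect to the Euler
derivation `X d/dX`. It is meaningful when the constant coefficient of `F` is nonzero. -/
noncomputable def eulerLogDeriv (F : k⟦X⟧) : k⟦X⟧ :=
  PowerSeries.X * d⁄dX k F * F⁻¹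

theorem eulerLogDeriv_eq_of_X_mul_derivative_eq {F s : k⟦X⟧} (hF : F.constantCoeff ≠ 0)
    (h : PowerSeries.X * d⁄dX k F = F * s) : eulerLogDeriv F = s := by
  rw [eulerLogDeriv, h, mul_right_comm, PowerSeries.mul_inv_cancel F hF, one_mul]

theorem eulerLogDeriv_one : eulerLogDeriv (1 : k⟦X⟧) = 0 := by
  rw [eulerLogDeriv, PowerSeries.derivative_one, mul_zero, zero_mul]

theorem eulerLogDeriv_mul {F G : k⟦X⟧} (hF : F.constantCoeff ≠ 0) (hG : G.constantCoeff ≠ 0) :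
    eulerLogDeriv (F * G) = eulerLogDeriv F + eulerLogDeriv G := by
  refine eulerLogDeriv_eq_of_X_mul_derivative_eq (by simp [hF, hG]) ?_
  have hF' := PowerSeries.mul_inv_cancel F hF
  have hG' := PowerSeries.mul_inv_cancel G hG
  simp only [eulerLogDeriv, Derivation.leibniz, smul_eq_mul]
  linear_combination (-(PowerSeries.X * d⁄dX k F * G)) * hF' - PowerSeries.X * d⁄dX k G * F * hG'

theorem eulerLogDeriv_prod {ι : Type*} (s : Finset ι) {F : ι → k⟦X⟧}
    (hF : ∀ i ∈ s, (F i).constantCoeff ≠ 0) :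
    eulerLogDeriv (∏ i ∈ s, F i) = ∑ i ∈ s, eulerLogDeriv (F i) := by
  classical
  induction s using Finset.induction_on with
  | empty => exact eulerLogDeriv_one
  | insert i s hi ih =>
    rw [Finset.forall_mem_insert] at hF
    have hs : (∏ j ∈ s, F j).constantCoeff ≠ 0 := by
      rw [map_prod]
      exact Finset.prod_ne_zero_iff.2 hF.2
    rw [Finset.prod_insert hi, Finset.sum_insert hi, eulerLogDeriv_mul hF.1 hs, ih hF.2]

theorem coeff_eulerLogDeriv_one_sub_C_mul_X (α : k) {n : ℕ} (hn : n ≠ 0) :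
    (eulerLogDeriv (1 - PowerSeries.C α * PowerSeries.X)).coeff n = -α ^ n := by
  have h : eulerLogDeriv (1 - PowerSeries.C α * PowerSeries.X) =
      PowerSeries.X * -PowerSeries.mk fun m => α ^ (m + 1) := by
    refine eulerLogDeriv_eq_of_X_mul_derivative_eq (by simp) ?_
    ext (_ | _ | m) <;>
      simp [mul_left_comm _ PowerSeries.X, sub_mul, mul_assoc, PowerSeries.coeff_succ_X_mul,
        pow_succ, PowerSeries.coeff_X]
    ring
  obtain ⟨m, rfl⟩ := Nat.exists_eq_succ_of_ne_zero hn
  simp [h, PowerSeries.coeff_succ_X_mul]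

theorem reverse_X_sub_C {R : Type*} [CommRing R] [Nontrivial R] (a : R) :
    (X - C a).reverse = 1 - C a * X := by
  have hX : (X : R[X]).reverse = 1 := by
    simpa using (reverse_mul_X (C (1 : R))).trans (reverse_C 1)
  rw [sub_eq_add_neg, ← C_neg, reverse_add_C, hX, natDegree_X, pow_one, C_neg, neg_mul,
    ← sub_eq_add_neg]

theorem reverse_multiset_prod {R : Type*} [CommRing R] [IsDomain R] (s : Multiset R[X]) :
    s.prod.reverse = (s.map reverse).prod := by
  induction s using Multiset.induction_on with
  | empty => simpa using reverse_C (1 : R)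
  | cons p s ih => simp [reverse_mul_of_domain, ih]

theorem coeff_eulerLogDeriv_multiset_prod_one_sub (s : Multiset k) {n : ℕ} (hn : n ≠ 0) :
    (eulerLogDeriv (s.map fun α => 1 - PowerSeries.C α * PowerSeries.X).prod).coeff n =
      -(s.map (· ^ n)).sum := by
  induction s using Multiset.induction_on with
  | empty => simp [eulerLogDeriv_one]
  | cons α s ih =>
    have hs : (s.map fun α => 1 - PowerSeries.C α * PowerSeries.X).prod.constantCoeff ≠ 0 := by
      simp [map_multiset_prod]
    rw [Multiset.map_cons, Multiset.prod_cons, eulerLogDeriv_mul (by simp) hs, map_add, ih,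
      coeff_eulerLogDeriv_one_sub_C_mul_X α hn, Multiset.map_cons, Multiset.sum_cons, neg_add]

theorem coe_reverse_eq_multiset_prod_one_sub {p : k[X]} (hm : p.Monic) (hp : p.Splits) :
    (p.reverse : k⟦X⟧) = (p.roots.map fun α => 1 - PowerSeries.C α * PowerSeries.X).prod := by
  conv_lhs => rw [hp.eq_prod_roots_of_monic hm, reverse_multiset_prod]
  rw [← Polynomial.coeToPowerSeries.ringHom_apply, map_multiset_prod, Multiset.map_map,
    Multiset.map_map]
  simp [Function.comp_def, reverse_X_sub_C]

theorem coeff_eulerLogDeriv_reverse {p : k[X]} (hm : p.Monic) (hp : p.Splits)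
    {n : ℕ} (hn : n ≠ 0) :
    (eulerLogDeriv (p.reverse : k⟦X⟧)).coeff n = -(p.roots.map (· ^ n)).sum := by
  rw [coe_reverse_eq_multiset_prod_one_sub hm hp, coeff_eulerLogDeriv_multiset_prod_one_sub _ hn]

end EulerLogDeriv

section Rho

theorem rho_mul (n : ℕ) {γ δ : ℤ[X]} (hγ : γ.Monic) (hδ : δ.Monic) :
    rho n (γ * δ) = rho n γ + rho n δ := by
  have h := ((hγ.mul hδ).map (Int.castRingHom ℂ)).ne_zero
  rw [Polynomial.map_mul] at h
  rw [rho, Polynomial.map_mul, roots_mul h, Multiset.map_add, Multiset.sum_add, rho, rho]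

theorem rho_pow (n m : ℕ) (γ : ℤ[X]) : rho n (γ ^ m) = m * rho n γ := by
  rw [rho, Polynomial.map_pow, roots_pow, Multiset.map_nsmul, Multiset.sum_nsmul, nsmul_eq_mul, rho]

/-- The reciprocal polynomial `X ^ deg γ * γ(1/X)`, as a complex power series. -/
noncomputable def reciprocal (γ : ℤ[X]) : ℂ⟦X⟧ :=
  ((γ.map (Int.castRingHom ℂ)).reverse : ℂ[X])

theorem reciprocal_mul (γ δ : ℤ[X]) : reciprocal (γ * δ) = reciprocal γ * reciprocal δ := by
  rw [reciprocal, Polynomial.map_mul, reverse_mul_of_domain, coe_mul, reciprocal, reciprocal]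

theorem reciprocal_pow (γ : ℤ[X]) (m : ℕ) : reciprocal (γ ^ m) = reciprocal γ ^ m := by
  induction m with
  | zero =>
    have h : (1 : ℂ[X]).reverse = 1 := reverse_C 1
    simp [reciprocal, h]
  | succ m ih => rw [pow_succ, reciprocal_mul, ih, pow_succ]

theorem coeff_eulerLogDeriv_reciprocal {γ : ℤ[X]} (hγ : γ.Monic) {n : ℕ} (hn : n ≠ 0) :
    (eulerLogDeriv (reciprocal γ)).coeff n = -rho n γ :=
  coeff_eulerLogDeriv_reverse (hγ.map _) (IsAlgClosed.splits _) hn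

end Rho

section MonicPolynomials

/-- The vector of length `ℓ` obtained from `v` by truncation or by appending zeros. -/
def resize {α : Type*} [Zero α] {m : ℕ} (ℓ : ℕ) (v : Fin m → α) : Fin ℓ → α :=
  fun i => if h : (i : ℕ) < m then v ⟨i, h⟩ else 0

theorem resize_append {α : Type*} [Zero α] {ℓ r : ℕ} (v : Fin ℓ → α) (w : Fin r → α) :
    resize ℓ (Fin.append v w) = v := by
  ext i
  have h : (i : ℕ) < ℓ + r := i.2.trans_le (Nat.le_add_right ℓ r)
  rw [resize, dif_pos h]
  exact Fin.append_left v w i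

variable {R : Type*} [Ring R] [Nontrivial R]

/-- The coefficients `a₁, …, a_ℓ` of a polynomial `X ^ m + a₁ X ^ (m - 1) + a₂ X ^ (m - 2) + ⋯`,
with `a_i = 0` for `i > m`; the entry of index `i : Fin ℓ` is `a_{i+1}`. -/
noncomputable def topCoeffs (ℓ : ℕ) (f : R[X]) : Fin ℓ → R :=
  fun i => f.reverse.coeff (i + 1)

/-- A monic polynomial of degree `m` is determined by its vector of non-leading coefficients,
listed in order of decreasing degree. -/
noncomputable def monicEquivFun (R : Type*) [Ring R] [Nontrivial R] (m : ℕ) :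
    {f : R[X] // f.Monic ∧ f.natDegree = m} ≃ (Fin m → R) :=
  (monicEquivDegreeLT m).trans
    ((degreeLTEquiv R m).toEquiv.trans (Equiv.arrowCongr Fin.revPerm (Equiv.refl R)))

theorem topCoeffs_eq_resize_monicEquivFun {m : ℕ} (ℓ : ℕ)
    (f : {f : R[X] // f.Monic ∧ f.natDegree = m}) :
    topCoeffs ℓ f.1 = resize ℓ (monicEquivFun R m f) := by
  obtain ⟨f, -, rfl⟩ := f
  ext i
  rw [topCoeffs, resize]
  split_ifs with hi
  · rw [coeff_reverse, revAt_le hi]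
    have h : f.natDegree - (i + 1) ≠ f.natDegree := by omega
    simp [h, monicEquivFun, monicEquivDegreeLT, degreeLTEquiv, eraseLead_coeff]
  · exact coeff_eq_zero_of_natDegree_lt ((reverse_natDegree_le f).trans_lt (by omega))

variable [Fintype R]

/-- The monic polynomials of degree `m` over a finite ring. -/
noncomputable def monicsOfDegree (R : Type*) [Ring R] [Nontrivial R] [Fintype R] (m : ℕ) :
    Finset R[X] :=
  Finset.univ.map ((monicEquivFun R m).symm.toEmbedding.trans (Function.Embedding.subtype _))

theorem mem_monicsOfDegree {m : ℕ} {f : R[X]} :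
    f ∈ monicsOfDegree R m ↔ f.Monic ∧ f.natDegree = m := by
  simp [monicsOfDegree, (monicEquivFun R m).symm.exists_congr_left]

theorem sum_monicsOfDegree_topCoeffs {A : Type*} [AddCommMonoid A] (ℓ m : ℕ)
    (G : (Fin ℓ → R) → A) :
    ∑ f ∈ monicsOfDegree R m, G (topCoeffs ℓ f) = ∑ v : Fin m → R, G (resize ℓ v) := by
  simp only [monicsOfDegree, Finset.sum_map, Function.Embedding.trans_apply,
    Equiv.coe_toEmbedding, Function.Embedding.subtype_apply, topCoeffs_eq_resize_monicEquivFun,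
    Equiv.apply_symm_apply]

theorem sum_monicsOfDegree_topCoeffs_eq_zero {A : Type*} [AddCommMonoid A] {ℓ m : ℕ} (h : ℓ ≤ m)
    {G : (Fin ℓ → R) → A} (hG : ∑ v, G v = 0) :
    ∑ f ∈ monicsOfDegree R m, G (topCoeffs ℓ f) = 0 := by
  obtain ⟨r, rfl⟩ := Nat.exists_eq_add_of_le h
  rw [sum_monicsOfDegree_topCoeffs, ← (Fin.appendEquiv ℓ r).sum_comp, Fintype.sum_prod_type_right]
  exact Finset.sum_eq_zero fun w _ => by simpa [Fin.appendEquiv, resize_append] using hG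

end MonicPolynomials

section PrimePowers

variable {F : Type*} [Field F] [Fintype F]

/-- The pairs `(P, k)` with `P` a monic irreducible polynomial over a finite field and `k ≠ 0` such
that the prime power `P ^ k` has degree `n`. -/
noncomputable def primePowers (F : Type*) [Field F] [Fintype F] (n : ℕ) : Finset (Σ _ : F[X], ℕ) :=
  open Classical in
  {x ∈ ((Finset.range (n + 1)).biUnion (monicsOfDegree F)).sigma fun _ => Finset.range (n + 1) |
    Irreducible x.1 ∧ x.2 ≠ 0 ∧ x.1.natDegree * x.2 = n}

theorem mem_primePowers {n : ℕ} {x : Σ _ : F[X], ℕ} :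
    x ∈ primePowers F n ↔
      x.1.Monic ∧ Irreducible x.1 ∧ x.2 ≠ 0 ∧ x.1.natDegree * x.2 = n := by
  simp only [primePowers, Finset.mem_filter, Finset.mem_sigma, Finset.mem_biUnion,
    Finset.mem_range, mem_monicsOfDegree]
  constructor
  · rintro ⟨⟨⟨_, _, hm, _⟩, _⟩, h⟩
    exact ⟨hm, h⟩
  · rintro ⟨hm, hi, hk, rfl⟩
    refine ⟨⟨⟨_, ?_, hm, rfl⟩, ?_⟩, hi, hk, rfl⟩
    · exact Nat.lt_succ_of_le (Nat.le_mul_of_pos_right _ (Nat.pos_of_ne_zero hk))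
    · exact Nat.lt_succ_of_le (Nat.le_mul_of_pos_left _ hi.natDegree_pos)

end PrimePowers

section PrimePowerDivisors

open UniqueFactorizationMonoid Finset.HasAntidiagonal

variable {F : Type*} [Field F]

open Classical in
theorem pow_dvd_iff_le_count_normalizedFactors {P f : F[X]} (hP : P.Monic) (hi : Irreducible P)
    (hf : f ≠ 0) (k : ℕ) : P ^ k ∣ f ↔ k ≤ (normalizedFactors f).count P := by
  rw [pow_dvd_iff_le_emultiplicity, emultiplicity_eq_count_normalizedFactors hi hf,
    hP.normalize_eq_self, Nat.cast_le]

open Classical in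
theorem sum_natDegree_normalizedFactors {f : F[X]} (hf : f ≠ 0) :
    ((normalizedFactors f).map natDegree).sum = f.natDegree := by
  rw [← natDegree_multiset_prod _ (zero_notMem_normalizedFactors f)]
  exact natDegree_eq_of_degree_eq (degree_eq_degree_of_associated (prod_normalizedFactors hf))

open Classical in
/-- The prime powers dividing a nonzero polynomial `f`, as pairs `(P, k)` with `P` monic irreducible
and `k ≠ 0`. -/
noncomputable def primePowerDivisors (f : F[X]) : Finset (Σ _ : F[X], ℕ) :=
  (normalizedFactors f).toFinset.sigma fun P => Finset.Icc 1 ((normalizedFactors f).count P)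

theorem mem_primePowerDivisors {f : F[X]} (hf : f ≠ 0) {x : Σ _ : F[X], ℕ} :
    x ∈ primePowerDivisors f ↔
      x.1.Monic ∧ Irreducible x.1 ∧ x.2 ≠ 0 ∧ x.1 ^ x.2 ∣ f := by
  classical
  obtain ⟨P, k⟩ := x
  simp only [primePowerDivisors, Finset.mem_sigma, Multiset.mem_toFinset, Finset.mem_Icc,
    Polynomial.mem_normalizedFactors_iff hf, Nat.one_le_iff_ne_zero]
  constructor
  · rintro ⟨⟨hi, hP, -⟩, hk, hle⟩
    exact ⟨hP, hi, hk, (pow_dvd_iff_le_count_normalizedFactors hP hi hf k).2 hle⟩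
  · rintro ⟨hP, hi, hk, hdvd⟩
    exact ⟨⟨hi, hP, (dvd_pow_self P hk).trans hdvd⟩, hk,
      (pow_dvd_iff_le_count_normalizedFactors hP hi hf k).1 hdvd⟩

open Classical in
theorem sum_natDegree_primePowerDivisors {f : F[X]} (hf : f ≠ 0) :
    ∑ x ∈ primePowerDivisors f, x.1.natDegree = f.natDegree := by
  rw [primePowerDivisors, Finset.sum_sigma, ← sum_natDegree_normalizedFactors hf,
    Finset.sum_multiset_map_count]
  simp

variable [Fintype F]

open Classical in
theorem filter_primePowerDivisors_natDegree {f : F[X]} (hf : f ≠ 0) (n : ℕ) :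
    {x ∈ primePowerDivisors f | x.1.natDegree * x.2 = n} =
      {x ∈ primePowers F n | x.1 ^ x.2 ∣ f} := by
  ext x
  simp only [Finset.mem_filter, mem_primePowerDivisors hf, mem_primePowers]
  tauto

open Classical in
theorem sum_antidiagonal_primePowers_dvd {f : F[X]} (hf : f ≠ 0) :
    ∑ p ∈ antidiagonal f.natDegree, ∑ x ∈ primePowers F p.2 with x.1 ^ x.2 ∣ f,
      x.1.natDegree = f.natDegree := by
  have hle (x) (hx : x ∈ primePowerDivisors f) : x.1.natDegree * x.2 ≤ f.natDegree := by
    rw [mul_comm, ← natDegree_pow]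
    exact natDegree_le_of_dvd ((mem_primePowerDivisors hf).1 hx).2.2.2 hf
  rw [← Finset.Nat.sum_antidiagonal_swap, Finset.Nat.sum_antidiagonal_eq_sum_range_succ_mk]
  simp only [Prod.swap, ← filter_primePowerDivisors_natDegree hf]
  rw [Finset.sum_fiberwise_of_maps_to fun x hx => Finset.mem_range_succ_iff.2 (hle x hx),
    sum_natDegree_primePowerDivisors hf]

end PrimePowerDivisors

section CharacterSums

open Finset.HasAntidiagonal (antidiagonal)

variable {F : Type*} [Field F] [Fintype F] {A : Type*} [CommRing A]

/-- The sum of a character of the multiplicative monoid `F[X]` over the monic polynomials of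
degree `n`. -/
noncomputable def charSum (χ : F[X] →* A) (n : ℕ) : A :=
  ∑ f ∈ monicsOfDegree F n, χ f

/-- The sum of a character over the prime powers `P ^ k` of degree `n`, weighted by the von
Mangoldt function `Λ(P ^ k) = deg P`. -/
noncomputable def primePowerSum (χ : F[X] →* A) (n : ℕ) : A :=
  ∑ x ∈ primePowers F n, x.1.natDegree * χ x.1 ^ x.2

open Classical in
theorem sum_monicsOfDegree_dvd (χ : F[X] →* A) {g : F[X]} (hg : g.Monic) {n i : ℕ}
    (h : i + g.natDegree = n) :
    ∑ f ∈ monicsOfDegree F n with g ∣ f, χ f = charSum χ i * χ g := by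
  rw [charSum, Finset.sum_mul]
  symm
  refine Finset.sum_bij (fun f _ => f * g) ?_ ?_ ?_ fun f _ => (map_mul χ f g).symm
  · intro f hf
    rw [mem_monicsOfDegree] at hf
    rw [Finset.mem_filter, mem_monicsOfDegree, hf.1.natDegree_mul hg, hf.2]
    exact ⟨⟨hf.1.mul hg, h⟩, dvd_mul_left g f⟩
  · exact fun f₁ _ f₂ _ => mul_right_cancel₀ hg.ne_zero
  · intro f hf
    rw [Finset.mem_filter, mem_monicsOfDegree] at hf
    obtain ⟨⟨hf, hn⟩, q, rfl⟩ := hf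
    have hq : q.Monic := hg.of_mul_monic_left hf
    rw [hg.natDegree_mul hq] at hn
    exact ⟨q, mem_monicsOfDegree.2 ⟨hq, by omega⟩, mul_comm q g⟩

/-- Counting each monic polynomial `f` of degree `n` with weight `n = ∑_{P ^ k ∣ f} deg P`. -/
theorem natCast_mul_charSum (χ : F[X] →* A) (n : ℕ) :
    n * charSum χ n = ∑ p ∈ antidiagonal n, charSum χ p.1 * primePowerSum χ p.2 := by
  classical
  calc
    n * charSum χ n = ∑ f ∈ monicsOfDegree F n, ∑ p ∈ antidiagonal n,
        ∑ x ∈ primePowers F p.2, if x.1 ^ x.2 ∣ f then x.1.natDegree * χ f else 0 := by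
      rw [charSum, Finset.mul_sum]
      refine Finset.sum_congr rfl fun f hfn => ?_
      obtain ⟨hf, rfl⟩ := mem_monicsOfDegree.1 hfn
      conv_lhs => rw [← sum_antidiagonal_primePowers_dvd hf.ne_zero]
      push_cast
      simp only [Finset.sum_mul, Finset.sum_filter, ite_mul, zero_mul]
    _ = ∑ p ∈ antidiagonal n, ∑ x ∈ primePowers F p.2,
        x.1.natDegree * ∑ f ∈ monicsOfDegree F n with x.1 ^ x.2 ∣ f, χ f := by
      rw [Finset.sum_comm]
      refine Finset.sum_congr rfl fun p _ => ?_
      rw [Finset.sum_comm]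
      simp only [← Finset.sum_filter, Finset.mul_sum]
    _ = ∑ p ∈ antidiagonal n, charSum χ p.1 * primePowerSum χ p.2 := by
      refine Finset.sum_congr rfl fun p hp => ?_
      rw [primePowerSum, Finset.mul_sum]
      refine Finset.sum_congr rfl fun x hx => ?_
      obtain ⟨hP, -, -, hdeg⟩ := mem_primePowers.1 hx
      have hn : p.1 + (x.1 ^ x.2).natDegree = n := by
        rw [natDegree_pow, mul_comm, hdeg, Finset.HasAntidiagonal.mem_antidiagonal.1 hp]
      rw [sum_monicsOfDegree_dvd χ (hP.pow x.2) hn, map_pow]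
      ring

/-- The `L`-series of a character of `F[X]`, in the variable `T = q ^ (-s)`. -/
noncomputable def charLSeries (χ : F[X] →* A) : A⟦X⟧ :=
  PowerSeries.mk (charSum χ)

theorem eulerLogDeriv_charLSeries {k : Type*} [Field k] {χ : F[X] →* k}
    (h : (charLSeries χ).constantCoeff ≠ 0) :
    eulerLogDeriv (charLSeries χ) = PowerSeries.mk (primePowerSum χ) := by
  refine eulerLogDeriv_eq_of_X_mul_derivative_eq h ?_
  ext n
  have hn : (PowerSeries.X * d⁄dX k (charLSeries χ)).coeff n = n * charSum χ n := by
    cases n <;> simp [charLSeries, PowerSeries.coeff_succ_X_mul, PowerSeries.coeff_derivative,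
      mul_comm]
  rw [hn, natCast_mul_charSum, PowerSeries.coeff_mul]
  simp only [charLSeries, PowerSeries.coeff_mk]

end CharacterSums

section FieldCharpoly

open Module (finrank)

variable (F : Type*) {K : Type*} [Field F] [Field K] [Algebra F K]

/-- The characteristic polynomial, relative to `F`, of an element `a` of a finite extension `K`,
encoded as the power of the minimal polynomial of `a` which has degree `[K : F]`. -/
noncomputable def fieldCharpoly (a : K) : F[X] :=
  minpoly F a ^ (finrank F K / (minpoly F a).natDegree)

theorem natDegree_fieldCharpoly [FiniteDimensional F K] (a : K) :
    (fieldCharpoly F a).natDegree = finrank F K := by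
  rw [fieldCharpoly, natDegree_pow,
    Nat.div_mul_cancel (minpoly.degree_dvd (Algebra.IsIntegral.isIntegral a))]

theorem splits_map_of_natDegree_dvd_finrank [Finite K] {P : F[X]} (hi : Irreducible P)
    (hd : P.natDegree ∣ finrank F K) : (P.map (algebraMap F K)).Splits := by
  have := Finite.of_injective _ (algebraMap F K).injective
  rw [hi.natDegree_dvd_iff_dvd_X_pow_card_pow_sub_X, ← Module.natCard_eq_pow_finrank] at hd
  have hdvd := Polynomial.map_dvd (algebraMap F K) hd
  rw [Polynomial.map_sub, Polynomial.map_pow, map_X] at hdvd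
  exact splits_X_pow_nat_card_sub_X.of_dvd
    (FiniteField.X_pow_card_sub_X_ne_zero K Finite.one_lt_card) hdvd

theorem card_filter_minpoly_eq [Fintype K] [DecidableEq F[X]] {P : F[X]} (hP : P.Monic)
    (hi : Irreducible P) (hd : P.natDegree ∣ finrank F K) :
    Finset.card {a : K | minpoly F a = P} = P.natDegree := by
  classical
  have := Finite.of_injective _ (algebraMap F K).injective
  rw [← card_rootSet_eq_natDegree (PerfectField.separable_of_irreducible hi)
    (splits_map_of_natDegree_dvd_finrank F hi hd), Fintype.card_subtype]
  congr 1
  ext a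
  simp only [Finset.mem_filter, Finset.mem_univ, true_and, mem_rootSet]
  exact ⟨fun h => ⟨hi.ne_zero, h ▸ minpoly.aeval F a⟩,
    fun h => (minpoly.eq_of_irreducible_of_monic hi h.2 hP).symm⟩

variable [Fintype F]

theorem sum_apply_fieldCharpoly [Fintype K] {A : Type*} [CommRing A] (χ : F[X] →* A) :
    ∑ a : K, χ (fieldCharpoly F a) = primePowerSum χ (finrank F K) := by
  classical
  let g (a : K) : Σ _ : F[X], ℕ := ⟨minpoly F a, finrank F K / (minpoly F a).natDegree⟩
  have hg (a : K) : g a ∈ primePowers F (finrank F K) := by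
    have ha : IsIntegral F a := Algebra.IsIntegral.isIntegral a
    have hd := minpoly.degree_dvd ha
    exact mem_primePowers.2 ⟨minpoly.monic ha, minpoly.irreducible ha,
      (Nat.div_pos (Nat.le_of_dvd Module.finrank_pos hd) (minpoly.natDegree_pos ha)).ne',
      Nat.mul_div_cancel' hd⟩
  rw [← Finset.sum_fiberwise_of_maps_to fun a _ => hg a, primePowerSum]
  refine Finset.sum_congr rfl fun ⟨P, k⟩ hx => ?_
  obtain ⟨hP, hi, -, hk⟩ := mem_primePowers.1 hx
  have hquot : finrank F K / P.natDegree = k :=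
    Nat.div_eq_of_eq_mul_right hi.natDegree_pos hk.symm
  have hfib (a : K) : g a = ⟨P, k⟩ ↔ minpoly F a = P := by
    simp only [g, Sigma.mk.injEq, heq_eq_eq, and_iff_left_iff_imp]
    rintro rfl
    exact hquot
  have hχ : ∀ a ∈ ({a : K | minpoly F a = P} : Finset K), χ (fieldCharpoly F a) = χ P ^ k := by
    intro a ha
    rw [fieldCharpoly, map_pow, (Finset.mem_filter_univ a).1 ha, hquot]
  simp only [hfib]
  rw [Finset.sum_congr rfl hχ, Finset.sum_const, nsmul_eq_mul,
    card_filter_minpoly_eq F hP hi (hk ▸ dvd_mul_right _ _)]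

theorem isRoot_map_minpoly_pow_card_pow (a : K) (i : ℕ) :
    ((minpoly F a).map (algebraMap F K)).IsRoot (a ^ Fintype.card F ^ i) := by
  have h : (FiniteField.frobeniusAlgHom F K ^ i) a = a ^ Fintype.card F ^ i := by
    rw [AlgHom.coe_pow, FiniteField.coe_frobeniusAlgHom, pow_iterate]
  rw [IsRoot.def, eval_map_algebraMap, ← h, aeval_algHom_apply, minpoly.aeval, map_zero]

variable [Finite K]

theorem pow_card_pow_eq_self_iff (a : K) (k : ℕ) :
    a ^ Fintype.card F ^ k = a ↔ (minpoly F a).natDegree ∣ k := by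
  have ha : Irreducible (minpoly F a) := minpoly.irreducible (Algebra.IsIntegral.isIntegral a)
  rw [ha.natDegree_dvd_iff_dvd_X_pow_card_pow_sub_X, minpoly.dvd_iff]
  simp [sub_eq_zero]

theorem minimalPeriod_pow_card (a : K) :
    Function.minimalPeriod (· ^ Fintype.card F) a = (minpoly F a).natDegree := by
  have h (k : ℕ) :
      Function.minimalPeriod (· ^ Fintype.card F) a ∣ k ↔ (minpoly F a).natDegree ∣ k := by
    rw [← pow_card_pow_eq_self_iff, ← Function.isPeriodicPt_iff_minimalPeriod_dvd,
      Function.IsPeriodicPt, Function.IsFixedPt, pow_iterate]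
  exact Nat.dvd_antisymm ((h _).2 dvd_rfl) ((h _).1 dvd_rfl)

theorem map_minpoly_eq_prod (a : K) :
    (minpoly F a).map (algebraMap F K) =
      ∏ i ∈ Finset.range (minpoly F a).natDegree, (X - C (a ^ Fintype.card F ^ i)) := by
  have hinj : Set.InjOn (fun i => a ^ Fintype.card F ^ i)
      (Finset.range (minpoly F a).natDegree) := by
    rw [← minimalPeriod_pow_card, Finset.coe_range]
    simpa only [pow_iterate] using
      Function.iterate_injOn_Iio_minimalPeriod (f := (· ^ Fintype.card F)) (x := a)
  refine eq_of_monic_of_dvd_of_natDegree_le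
    (monic_prod_of_monic _ _ fun i _ => monic_X_sub_C _)
    ((minpoly.monic (Algebra.IsIntegral.isIntegral a)).map _) ?_ ?_
  · refine Finset.prod_dvd_of_coprime (fun i hi j hj hij => ?_) fun i _ =>
      dvd_iff_isRoot.2 (isRoot_map_minpoly_pow_card_pow F a i)
    exact isCoprime_X_sub_C_of_isUnit_sub (sub_ne_zero.2 fun h => hij (hinj hi hj h)).isUnit
  · rw [natDegree_map, natDegree_prod_of_monic _ _ fun i _ => monic_X_sub_C _]
    simp only [natDegree_X_sub_C, Finset.sum_const, Finset.card_range, smul_eq_mul, mul_one,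
      le_refl]

theorem prod_range_mul_of_periodic {M : Type*} [CommMonoid M] {f : ℕ → M} {d : ℕ}
    (h : Function.Periodic f d) (k : ℕ) :
    ∏ i ∈ Finset.range (k * d), f i = (∏ i ∈ Finset.range d, f i) ^ k := by
  induction k with
  | zero => simp
  | succ k ih =>
    have hk (i : ℕ) : f (k * d + i) = f i := by
      rw [add_comm]
      exact h.nat_mul k i
    rw [Nat.succ_mul, Finset.prod_range_add, ih, pow_succ]
    simp only [hk]

theorem map_fieldCharpoly_eq_prod (a : K) :
    (fieldCharpoly F a).map (algebraMap F K) =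
      ∏ i ∈ Finset.range (finrank F K), (X - C (a ^ Fintype.card F ^ i)) := by
  have hper : Function.Periodic (fun i => X - C (a ^ Fintype.card F ^ i))
      (minpoly F a).natDegree := fun i => by
    beta_reduce
    rw [add_comm, pow_add, pow_mul, (pow_card_pow_eq_self_iff F a _).2 dvd_rfl]
  rw [fieldCharpoly, Polynomial.map_pow, map_minpoly_eq_prod, ← prod_range_mul_of_periodic hper,
    Nat.div_mul_cancel (minpoly.degree_dvd (Algebra.IsIntegral.isIntegral a))]

theorem algebraMap_coeff_reverse_fieldCharpoly (a : K) {k : ℕ} (hk : k ≤ finrank F K) :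
    algebraMap F K ((fieldCharpoly F a).reverse.coeff k) =
      (-1) ^ k * traceFn (Fintype.card F) (finrank F K) k a := by
  rw [coeff_reverse, natDegree_fieldCharpoly, revAt_le hk, ← coeff_map, map_fieldCharpoly_eq_prod]
  simp only [sub_eq_add_neg, ← C_neg]
  rw [Finset.prod_X_add_C_coeff _ _ (by simp), Finset.card_range, Nat.sub_sub_self hk, traceFn,
    Finset.mul_sum]
  refine Finset.sum_congr rfl fun s hs => ?_
  rw [Finset.prod_neg, (Finset.mem_powersetCard.1 hs).2]

end FieldCharpoly

section TruncatedMultiplication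

/-- The product of `1 + ∑ v_i T ^ (i + 1)` and `1 + ∑ w_i T ^ (i + 1)` modulo `T ^ (ℓ + 1)`, in
terms of the coefficient vectors. -/
def truncMul {R : Type*} [Semiring R] {ℓ : ℕ} (v w : Fin ℓ → R) : Fin ℓ → R :=
  fun i => v i + w i + ∑ j : Fin i, v ⟨j, by omega⟩ * w ⟨i - 1 - j, by omega⟩

variable {R : Type*} [Ring R]

theorem topCoeffs_one (ℓ : ℕ) : topCoeffs ℓ (1 : R[X]) = 0 := by
  have h : (1 : R[X]).reverse = 1 := reverse_C 1
  ext i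
  simp [topCoeffs, h, coeff_one]

theorem topCoeffs_mul [NoZeroDivisors R] (ℓ : ℕ) {f g : R[X]} (hf : f.Monic) (hg : g.Monic) :
    topCoeffs ℓ (f * g) = truncMul (topCoeffs ℓ f) (topCoeffs ℓ g) := by
  ext i
  rw [topCoeffs, reverse_mul_of_domain, coeff_mul,
    Finset.Nat.sum_antidiagonal_eq_sum_range_succ_mk, Finset.sum_range_succ, Finset.sum_range_succ',
    Finset.sum_range]
  have h (j : Fin i) : (i : ℕ) + 1 - (j + 1) = i - 1 - j + 1 := by omega
  simp only [truncMul, topCoeffs, coeff_zero_reverse, hf.leadingCoeff, hg.leadingCoeff,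
    Nat.sub_self, mul_one, one_mul, Nat.sub_zero, h]
  abel

end TruncatedMultiplication

section HayesCharacters

/-- The group `(1 + T 𝔽₂[T]) / (1 + T ^ 6 𝔽₂[T])` modulo the subgroup `{1, 1 + T ^ 4}`, written
additively with respect to the generators `1 + T`, `1 + T ^ 3` and `1 + T ^ 5`, of orders `4`, `2`
and `2`. The subgroup is divided out because the fourth trace is unrestricted. -/
abbrev HayesGroup : Type := ZMod 4 × ZMod 2 × ZMod 2

/-- The discrete logarithm of the class of `1 + ∑ v_i T ^ (i + 1)` in `HayesGroup`, that is, the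
exponents `(a, b, c)` for which this polynomial agrees modulo `T ^ 6`, up to a factor `1 + T ^ 4`,
with `(1 + T) ^ a * (1 + T ^ 3) ^ b * (1 + T ^ 5) ^ c`. -/
def dlog (v : Fin 5 → ZMod 2) : HayesGroup :=
  ((v 0).val + 2 * (v 1).val, v 2 + v 0 * v 1, v 4 + v 0 * v 2 + v 1 * v 2 + v 0 * v 3)

theorem dlog_zero : dlog 0 = 0 := by
  decide

theorem dlog_truncMul : ∀ v w : Fin 5 → ZMod 2, dlog (truncMul v w) = dlog v + dlog w := by
  decide +kernel

theorem dlog_eq_zero_iff :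
    ∀ v : Fin 5 → ZMod 2, dlog v = 0 ↔ v 0 = 0 ∧ v 1 = 0 ∧ v 2 = 0 ∧ v 4 = 0 := by
  decide +kernel

/-- The pairing of `HayesGroup` with itself which identifies it with its dual group. -/
def dualChar (h x : HayesGroup) : GaussianInt :=
  AddChar.zmodChar 4 (ζ := ⟨0, 1⟩) (by decide) (h.1 * x.1) *
    AddChar.zmodChar 2 (ζ := -1) (by decide) (h.2.1 * x.2.1 + h.2.2 * x.2.2)

theorem dualChar_zero_left (x : HayesGroup) : dualChar 0 x = 1 := by
  simp [dualChar]

theorem dualChar_zero_right (h : HayesGroup) : dualChar h 0 = 1 := by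
  simp [dualChar]

theorem dualChar_add (h x y : HayesGroup) :
    dualChar h (x + y) = dualChar h x * dualChar h y := by
  simp only [dualChar, Prod.fst_add, Prod.snd_add, mul_add, AddChar.map_add_eq_mul]
  ring

theorem sum_dualChar : ∀ x, ∑ h, dualChar h x = if x = 0 then 16 else 0 := by
  decide +kernel

theorem monic_of_ne_zero {f : (ZMod 2)[X]} (hf : f ≠ 0) : f.Monic := by
  have h : ∀ c : ZMod 2, c ≠ 0 → c = 1 := by decide
  exact h _ (leadingCoeff_ne_zero.2 hf)

open Classical in
/-- The character of `𝔽₂[X]`, depending only on the five coefficients below the leading one, which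
corresponds to `h` under the identification of `HayesGroup` with its dual. -/
noncomputable def hayesChar (h : HayesGroup) : (ZMod 2)[X] →* ℂ where
  toFun f := if f = 0 then 0 else (dualChar h (dlog (topCoeffs 5 f))).toComplex
  map_one' := by simp [topCoeffs_one, dlog_zero, dualChar_zero_right]
  map_mul' f g := by
    by_cases hf : f = 0
    · simp [hf]
    by_cases hg : g = 0
    · simp [hg]
    simp [hf, hg, topCoeffs_mul 5 (monic_of_ne_zero hf) (monic_of_ne_zero hg), dlog_truncMul,
      dualChar_add]

theorem hayesChar_apply (h : HayesGroup) {f : (ZMod 2)[X]} (hf : f.Monic) :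
    hayesChar h f = (dualChar h (dlog (topCoeffs 5 f))).toComplex :=
  if_neg hf.ne_zero

theorem hayesChar_zero_apply {f : (ZMod 2)[X]} (hf : f.Monic) : hayesChar 0 f = 1 := by
  rw [hayesChar_apply 0 hf, dualChar_zero_left, map_one]

theorem sum_hayesChar {f : (ZMod 2)[X]} (hf : f.Monic) :
    ∑ h, hayesChar h f = if dlog (topCoeffs 5 f) = 0 then 16 else 0 := by
  simp only [hayesChar_apply _ hf, ← map_sum, sum_dualChar, apply_ite GaussianInt.toComplex,
    map_ofNat, map_zero]

theorem charSum_hayesChar (h : HayesGroup) (m : ℕ) :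
    charSum (hayesChar h) m =
      (∑ v : Fin m → ZMod 2, dualChar h (dlog (resize 5 v))).toComplex := by
  rw [← sum_monicsOfDegree_topCoeffs 5 m fun v => dualChar h (dlog v), map_sum, charSum]
  exact Finset.sum_congr rfl fun f hf => hayesChar_apply h (mem_monicsOfDegree.1 hf).1

theorem sum_dualChar_dlog : ∀ h ≠ 0, ∑ v, dualChar h (dlog v) = 0 := by
  decide +kernel

theorem charSum_hayesChar_eq_zero {h : HayesGroup} (hh : h ≠ 0) {m : ℕ} (hm : 5 ≤ m) :
    charSum (hayesChar h) m = 0 := by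
  rw [charSum_hayesChar, ← sum_monicsOfDegree_topCoeffs 5 m fun v => dualChar h (dlog v),
    sum_monicsOfDegree_topCoeffs_eq_zero hm (sum_dualChar_dlog h hh), map_zero]

theorem charLSeries_hayesChar_eq_sum {h : HayesGroup} (hh : h ≠ 0) (z : Fin 5 → GaussianInt)
    (hz : ∀ m : Fin 5, ∑ v : Fin m → ZMod 2, dualChar h (dlog (resize 5 v)) = z m) :
    charLSeries (hayesChar h) =
      ∑ m : Fin 5, PowerSeries.C (z m).toComplex * PowerSeries.X ^ (m : ℕ) := by
  ext n
  simp only [charLSeries, PowerSeries.coeff_mk, map_sum, PowerSeries.coeff_C_mul,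
    PowerSeries.coeff_X_pow, mul_ite, mul_one, mul_zero]
  by_cases hn : n < 5
  · lift n to Fin 5 using hn
    simp [charSum_hayesChar, hz, Fin.val_inj]
  · rw [charSum_hayesChar_eq_zero hh (not_lt.1 hn)]
    exact (Finset.sum_eq_zero fun m _ => if_neg (by omega)).symm

end HayesCharacters

section Reciprocals

theorem reciprocal_eq_sum {γ : ℤ[X]} {n : ℕ} (hγ : γ.natDegree = n) :
    reciprocal γ =
      ∑ i ∈ Finset.range (n + 1), (γ.coeff (n - i) : ℂ⟦X⟧) * PowerSeries.X ^ i := by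
  have hdeg : (γ.map (Int.castRingHom ℂ)).natDegree = n :=
    (natDegree_map_eq_of_injective (RingHom.injective_int _) γ).trans hγ
  have hle : (γ.map (Int.castRingHom ℂ)).reverse.natDegree < n + 1 :=
    Nat.lt_succ_of_le ((reverse_natDegree_le _).trans_eq hdeg)
  rw [reciprocal, as_sum_range' _ (n + 1) hle, ← coeToPowerSeries.ringHom_apply, map_sum]
  refine Finset.sum_congr rfl fun i hi => ?_
  rw [coeff_reverse, hdeg, revAt_le (Finset.mem_range_succ_iff.1 hi), coeff_map,
    ← C_mul_X_pow_eq_monomial, map_mul, map_pow, coeToPowerSeries.ringHom_apply,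
    coeToPowerSeries.ringHom_apply, coe_X, coe_C, eq_intCast, map_intCast]

theorem monic_d21 : d21.Monic := by
  rw [d21]
  monicity!

theorem monic_d22 : d22.Monic := by
  rw [d22]
  monicity!

theorem monic_d23 : d23.Monic := by
  rw [d23]
  monicity!

theorem monic_d41 : d41.Monic := by
  rw [d41]
  monicity!

theorem monic_d42 : d42.Monic := by
  rw [d42]
  monicity!

theorem monic_d83 : d83.Monic := by
  rw [d83]
  monicity!

theorem reciprocal_d21 :
    reciprocal d21 = 1 + 2 * PowerSeries.X + 2 * PowerSeries.X ^ 2 := by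
  have h : d21.natDegree = 2 := by
    rw [d21]
    compute_degree!
  rw [reciprocal_eq_sum h, d21]
  simp [Finset.sum_range_succ, coeff_X]

theorem reciprocal_d22 :
    reciprocal d22 = 1 + 2 * PowerSeries.X ^ 2 := by
  have h : d22.natDegree = 2 := by
    rw [d22]
    compute_degree!
  rw [reciprocal_eq_sum h, d22]
  simp [Finset.sum_range_succ]

theorem reciprocal_d23 :
    reciprocal d23 = 1 - 2 * PowerSeries.X + 2 * PowerSeries.X ^ 2 := by
  have h : d23.natDegree = 2 := by
    rw [d23]
    compute_degree!
  rw [reciprocal_eq_sum h, d23]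
  simp [Finset.sum_range_succ, coeff_X]
  ring

theorem reciprocal_d41 :
    reciprocal d41 = 1 + 2 * PowerSeries.X + 2 * PowerSeries.X ^ 2 + 4 * PowerSeries.X ^ 3
      + 4 * PowerSeries.X ^ 4 := by
  have h : d41.natDegree = 4 := by
    rw [d41]
    compute_degree!
  rw [reciprocal_eq_sum h, d41]
  simp [Finset.sum_range_succ, coeff_X]

theorem reciprocal_d42 :
    reciprocal d42 = 1 + 2 * PowerSeries.X ^ 2 + 4 * PowerSeries.X ^ 4 := by
  have h : d42.natDegree = 4 := by
    rw [d42]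
    compute_degree!
  rw [reciprocal_eq_sum h, d42]
  simp [Finset.sum_range_succ]

theorem reciprocal_d83 :
    reciprocal d83 = 1 + 2 * PowerSeries.X + 2 * PowerSeries.X ^ 2 - 4 * PowerSeries.X ^ 4
      + 8 * PowerSeries.X ^ 6 + 16 * PowerSeries.X ^ 7 + 16 * PowerSeries.X ^ 8 := by
  have h : d83.natDegree = 8 := by
    rw [d83]
    compute_degree!
  rw [reciprocal_eq_sum h, d83]
  simp [Finset.sum_range_succ, coeff_X]
  ring

end Reciprocals

section LSeries

theorem charLSeries_hayesChar_001 :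
    charLSeries (hayesChar (0, 0, 1)) = reciprocal d21 * reciprocal d22 := by
  rw [charLSeries_hayesChar_eq_sum (by decide) ![1, 2, 4, 4, 4] (by decide +kernel),
    reciprocal_d21, reciprocal_d22]
  simp [Fin.sum_univ_succ, GaussianInt.toComplex_def]
  ring

theorem charLSeries_hayesChar_010 :
    charLSeries (hayesChar (0, 1, 0)) = reciprocal d21 := by
  rw [charLSeries_hayesChar_eq_sum (by decide) ![1, 2, 2, 0, 0] (by decide +kernel), reciprocal_d21]
  simp [Fin.sum_univ_succ, GaussianInt.toComplex_def]
  ring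

theorem charLSeries_hayesChar_011 :
    charLSeries (hayesChar (0, 1, 1)) = reciprocal d41 := by
  rw [charLSeries_hayesChar_eq_sum (by decide) ![1, 2, 2, 4, 4] (by decide +kernel), reciprocal_d41]
  simp [Fin.sum_univ_succ, GaussianInt.toComplex_def]
  ring

theorem charLSeries_hayesChar_200 :
    charLSeries (hayesChar (2, 0, 0)) = 1 := by
  rw [charLSeries_hayesChar_eq_sum (by decide) ![1, 0, 0, 0, 0] (by decide +kernel)]
  simp [Fin.sum_univ_succ]

theorem charLSeries_hayesChar_201 :
    charLSeries (hayesChar (2, 0, 1)) = reciprocal d21 * reciprocal d23 := by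
  rw [charLSeries_hayesChar_eq_sum (by decide) ![1, 0, 0, 0, 4] (by decide +kernel),
    reciprocal_d21, reciprocal_d23]
  simp [Fin.sum_univ_succ, GaussianInt.toComplex_def]
  ring

theorem charLSeries_hayesChar_210 :
    charLSeries (hayesChar (2, 1, 0)) = reciprocal d22 := by
  rw [charLSeries_hayesChar_eq_sum (by decide) ![1, 0, 2, 0, 0] (by decide +kernel), reciprocal_d22]
  simp [Fin.sum_univ_succ, GaussianInt.toComplex_def]

theorem charLSeries_hayesChar_211 :
    charLSeries (hayesChar (2, 1, 1)) = reciprocal d42 := by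
  rw [charLSeries_hayesChar_eq_sum (by decide) ![1, 0, 2, 0, 4] (by decide +kernel), reciprocal_d42]
  simp [Fin.sum_univ_succ, GaussianInt.toComplex_def]
  ring

theorem C_I_sq : (PowerSeries.C Complex.I : ℂ⟦X⟧) ^ 2 = -1 := by
  rw [← map_pow, Complex.I_sq, map_neg, map_one]

/-- The characters `(1, b, c)` and `(3, b, c)` are complex conjugate and have non-real `L`-series;
only the products of the two series are reciprocals of integer polynomials. -/
theorem charLSeries_hayesChar_100_mul_300 :
    charLSeries (hayesChar (1, 0, 0)) * charLSeries (hayesChar (3, 0, 0)) =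
      reciprocal d21 := by
  rw [charLSeries_hayesChar_eq_sum (by decide) ![1, ⟨1, 1⟩, 0, 0, 0] (by decide +kernel),
    charLSeries_hayesChar_eq_sum (by decide) ![1, ⟨1, -1⟩, 0, 0, 0] (by decide +kernel),
    reciprocal_d21]
  simp [Fin.sum_univ_succ, GaussianInt.toComplex_def]
  linear_combination -PowerSeries.X ^ 2 * C_I_sq

theorem charLSeries_hayesChar_101_mul_301 :
    charLSeries (hayesChar (1, 0, 1)) * charLSeries (hayesChar (3, 0, 1)) =
      reciprocal d21 * reciprocal d23 * reciprocal d41 := by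
  rw [charLSeries_hayesChar_eq_sum (by decide) ![1, ⟨1, 1⟩, 0, ⟨2, -2⟩, 4] (by decide +kernel),
    charLSeries_hayesChar_eq_sum (by decide) ![1, ⟨1, -1⟩, 0, ⟨2, 2⟩, 4] (by decide +kernel),
    reciprocal_d21, reciprocal_d23, reciprocal_d41]
  simp [Fin.sum_univ_succ, GaussianInt.toComplex_def]
  linear_combination -(PowerSeries.X - 2 * PowerSeries.X ^ 3) ^ 2 * C_I_sq

theorem charLSeries_hayesChar_110_mul_310 :
    charLSeries (hayesChar (1, 1, 0)) * charLSeries (hayesChar (3, 1, 0)) =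
      reciprocal d41 := by
  rw [charLSeries_hayesChar_eq_sum (by decide) ![1, ⟨1, 1⟩, ⟨0, 2⟩, 0, 0] (by decide +kernel),
    charLSeries_hayesChar_eq_sum (by decide) ![1, ⟨1, -1⟩, ⟨0, -2⟩, 0, 0] (by decide +kernel),
    reciprocal_d41]
  simp [Fin.sum_univ_succ, GaussianInt.toComplex_def]
  linear_combination -(PowerSeries.X + 2 * PowerSeries.X ^ 2) ^ 2 * C_I_sq

theorem charLSeries_hayesChar_111_mul_311 :
    charLSeries (hayesChar (1, 1, 1)) * charLSeries (hayesChar (3, 1, 1)) =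
      reciprocal d83 := by
  rw [charLSeries_hayesChar_eq_sum (by decide)
      ![1, ⟨1, 1⟩, ⟨0, 2⟩, ⟨-2, 2⟩, -4] (by decide +kernel),
    charLSeries_hayesChar_eq_sum (by decide)
      ![1, ⟨1, -1⟩, ⟨0, -2⟩, ⟨-2, -2⟩, -4] (by decide +kernel),
    reciprocal_d83]
  simp [Fin.sum_univ_succ, GaussianInt.toComplex_def]
  linear_combination
    -(PowerSeries.X + 2 * PowerSeries.X ^ 2 + 2 * PowerSeries.X ^ 3) ^ 2 * C_I_sq

end LSeries

section TracesAndCharacters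

open Module (finrank)

theorem constantCoeff_charLSeries_hayesChar (h : HayesGroup) :
    (charLSeries (hayesChar h)).constantCoeff = 1 := by
  have hz (v : Fin 0 → ZMod 2) : resize 5 v = 0 := by
    ext i
    simp [resize]
  rw [← PowerSeries.coeff_zero_eq_constantCoeff_apply, charLSeries, PowerSeries.coeff_mk,
    charSum_hayesChar, Fintype.sum_unique, hz, dlog_zero, dualChar_zero_right, map_one]

theorem prod_charLSeries_hayesChar :
    ∏ h ∈ Finset.univ.erase 0, charLSeries (hayesChar h) =
      reciprocal (d21 ^ 5 * d22 ^ 2 * d23 ^ 2 * d41 ^ 3 * d42 * d83) := by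
  have huniv : Finset.univ.erase (0 : HayesGroup) =
      {(0, 0, 1), (0, 1, 0), (0, 1, 1), (2, 0, 0), (2, 0, 1), (2, 1, 0), (2, 1, 1),
        (1, 0, 0), (3, 0, 0), (1, 0, 1), (3, 0, 1), (1, 1, 0), (3, 1, 0), (1, 1, 1),
        (3, 1, 1)} := by
    decide
  let L (a : ZMod 4) (b c : ZMod 2) := charLSeries (hayesChar (a, b, c))
  calc
    ∏ h ∈ Finset.univ.erase 0, charLSeries (hayesChar h)
      = L 0 0 1 * L 0 1 0 * L 0 1 1 * L 2 0 0 * L 2 0 1 * L 2 1 0 * L 2 1 1 *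
          (L 1 0 0 * L 3 0 0) * (L 1 0 1 * L 3 0 1) * (L 1 1 0 * L 3 1 0) *
          (L 1 1 1 * L 3 1 1) := by
        rw [huniv]
        repeat rw [Finset.prod_insert (by decide)]
        rw [Finset.prod_singleton]
        ring
    _ = reciprocal (d21 ^ 5 * d22 ^ 2 * d23 ^ 2 * d41 ^ 3 * d42 * d83) := by
        simp only [L, charLSeries_hayesChar_001, charLSeries_hayesChar_010,
          charLSeries_hayesChar_011, charLSeries_hayesChar_200, charLSeries_hayesChar_201,
          charLSeries_hayesChar_210, charLSeries_hayesChar_211,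
          charLSeries_hayesChar_100_mul_300, charLSeries_hayesChar_101_mul_301,
          charLSeries_hayesChar_110_mul_310, charLSeries_hayesChar_111_mul_311,
          reciprocal_mul, reciprocal_pow]
        ring

theorem sum_primePowerSum_hayesChar {n : ℕ} (hn : n ≠ 0) :
    ∑ h ∈ Finset.univ.erase 0, primePowerSum (hayesChar h) n =
      -(5 * rho n d21 + 2 * rho n d22 + 2 * rho n d23 + 3 * rho n d41 + rho n d42
        + rho n d83) := by
  have hc (h : HayesGroup) : (charLSeries (hayesChar h)).constantCoeff ≠ 0 := by
    rw [constantCoeff_charLSeries_hayesChar]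
    exact one_ne_zero
  have h1 := (monic_d21.pow 5).mul (monic_d22.pow 2)
  have h2 := h1.mul (monic_d23.pow 2)
  have h3 := h2.mul (monic_d41.pow 3)
  have h4 := h3.mul monic_d42
  calc
    ∑ h ∈ Finset.univ.erase 0, primePowerSum (hayesChar h) n
      = (eulerLogDeriv (∏ h ∈ Finset.univ.erase 0, charLSeries (hayesChar h))).coeff n := by
        rw [eulerLogDeriv_prod _ fun h _ => hc h, map_sum]
        simp only [eulerLogDeriv_charLSeries (hc _), PowerSeries.coeff_mk]
    _ = -rho n (d21 ^ 5 * d22 ^ 2 * d23 ^ 2 * d41 ^ 3 * d42 * d83) := by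
        rw [prod_charLSeries_hayesChar, coeff_eulerLogDeriv_reciprocal (h4.mul monic_d83) hn]
    _ = _ := by
        rw [rho_mul n h4 monic_d83, rho_mul n h3 monic_d42, rho_mul n h2 (monic_d41.pow 3),
          rho_mul n h1 (monic_d23.pow 2), rho_mul n (monic_d21.pow 5) (monic_d22.pow 2),
          rho_pow, rho_pow, rho_pow, rho_pow]
        norm_num

variable {K : Type*} [Field K] [Algebra (ZMod 2) K]

theorem monic_fieldCharpoly [FiniteDimensional (ZMod 2) K] (a : K) :
    (fieldCharpoly (ZMod 2) a).Monic :=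
  (minpoly.monic (Algebra.IsIntegral.isIntegral a)).pow _

theorem dlog_topCoeffs_fieldCharpoly_eq_zero_iff [Finite K] {n : ℕ} (hn : 5 ≤ n)
    (hK : finrank (ZMod 2) K = n) (a : K) :
    dlog (topCoeffs 5 (fieldCharpoly (ZMod 2) a)) = 0 ↔
      traceFn 2 n 1 a = 0 ∧ traceFn 2 n 2 a = 0 ∧ traceFn 2 n 3 a = 0 ∧ traceFn 2 n 5 a = 0 := by
  subst hK
  have h (i : Fin 5) : topCoeffs 5 (fieldCharpoly (ZMod 2) a) i = 0 ↔
      traceFn 2 (finrank (ZMod 2) K) (i + 1) a = 0 := by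
    have hi := algebraMap_coeff_reverse_fieldCharpoly (ZMod 2) a (k := i + 1) (by omega)
    rw [ZMod.card] at hi
    rw [topCoeffs, ← map_eq_zero (algebraMap (ZMod 2) K), hi]
    simp
  rw [dlog_eq_zero_iff, h, h, h, h]
  rfl

variable [Fintype K]

open Classical in
theorem sixteen_mul_card_dlog_eq_zero :
    16 * (Finset.card {a : K | dlog (topCoeffs 5 (fieldCharpoly (ZMod 2) a)) = 0} : ℂ) =
      Fintype.card K +
        ∑ h ∈ Finset.univ.erase 0, primePowerSum (hayesChar h) (finrank (ZMod 2) K) := by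
  calc
    16 * (Finset.card {a : K | dlog (topCoeffs 5 (fieldCharpoly (ZMod 2) a)) = 0} : ℂ)
      = ∑ a : K, ∑ h, hayesChar h (fieldCharpoly (ZMod 2) a) := by
        simp only [sum_hayesChar (monic_fieldCharpoly _)]
        rw [← Finset.sum_filter, Finset.sum_const, nsmul_eq_mul, mul_comm]
    _ = ∑ h, ∑ a : K, hayesChar h (fieldCharpoly (ZMod 2) a) := Finset.sum_comm
    _ = _ := by
        rw [← Finset.add_sum_erase _ _ (Finset.mem_univ 0)]
        simp only [hayesChar_zero_apply (monic_fieldCharpoly _), sum_apply_fieldCharpoly,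
          Finset.sum_const, Finset.card_univ, nsmul_eq_mul, mul_one]

end TracesAndCharacters

theorem statement16 (n : ℕ) (hn : 5 ≤ n)
    (K : Type) [Field K] [Fintype K] (hK : Fintype.card K = 2 ^ n) :
    (Nat.card {a : K // traceFn 2 n 1 a = 0 ∧ traceFn 2 n 2 a = 0 ∧
        traceFn 2 n 3 a = 0 ∧ traceFn 2 n 5 a = 0} : ℂ)
      = 2 ^ (n - 4) - (1 / 16) *
          (5 * rho n d21 + 2 * rho n d22 + 2 * rho n d23 + 3 * rho n d41
            + rho n d42 + rho n d83) := by
  classical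
  have : Fact (Nat.Prime 2) := ⟨Nat.prime_two⟩
  have : CharP K 2 := charP_of_card_eq_prime_pow hK
  let _ : Algebra (ZMod 2) K := ZMod.algebra K 2
  have hrank : Module.finrank (ZMod 2) K = n := by
    rw [Module.card_eq_pow_finrank (K := ZMod 2), ZMod.card] at hK
    exact Nat.pow_right_injective le_rfl hK
  have hcount := sixteen_mul_card_dlog_eq_zero (K := K)
  have hpow : (2 : ℂ) ^ n = 2 ^ (n - 4) * 2 ^ 4 := by
    rw [← pow_add, Nat.sub_add_cancel (by omega)]
  rw [hrank, hK, Nat.cast_pow, Nat.cast_ofNat, sum_primePowerSum_hayesChar (by omega), hpow]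
    at hcount
  simp only [dlog_topCoeffs_fieldCharpoly_eq_zero_iff hn hrank, ← Fintype.card_subtype,
    ← Nat.card_eq_fintype_card] at hcount
  linear_combination (1 / 16) * hcount
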